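/- arXiv:2003.14122 — 4 statements merged into one kernel-verified Lean document; each statement's English description precedes it below -/
import Mathlib

section
/- For every n : ℕ, every coefficient function c : (Fin n → Bool) → Bool, every x ∈ (Fin n → Bool), and every q ∈ Bool, the product (composition) over all u with c(u) = true of the gates C_u sends the basis state (x, q) to (x, q XOR f(x)), where f(x) = XOR over all u of (c(u) AND m_u(x)). In other words, the circuit Φ(f) corresponding to the ANF of a Boolean function f satisfies Φ(f)(x, q) = (x, q XOR f(x)) for all x and q. -/
/-- The Boolean monomial: `m_u(x) = true` iff `x i = true` for every `i` with `u i = true`. -/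
def mGate (n : ℕ) (u x : Fin n → Bool) : Bool :=
  decide (∀ i, u i = true → x i = true)

/-- The action of the multi-controlled X gate `C_u` on basis states:
`(x, q) ↦ (x, q XOR m_u(x))`. -/
def gateFun (n : ℕ) (u : Fin n → Bool) :
    (Fin n → Bool) × Bool → (Fin n → Bool) × Bool :=
  fun p => (p.1, xor p.2 (mGate n u p.1))

lemma gateFun_invol (n : ℕ) (u : Fin n → Bool) : Function.Involutive (gateFun n u) := by
  intro p; simp [gateFun, Bool.xor_assoc]

/-- The multi-controlled X gate `C_u` as a permutation of `(Fin n → Bool) × Bool`. -/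
def gate (n : ℕ) (u : Fin n → Bool) : Equiv.Perm ((Fin n → Bool) × Bool) :=
  (gateFun_invol n u).toPerm

lemma gate_commute (n : ℕ) (u v : Fin n → Bool) : Commute (gate n u) (gate n v) := by
  unfold Commute SemiconjBy
  ext p
  · simp [gate, gateFun, Equiv.Perm.mul_apply]
  · simp [gate, gateFun, Equiv.Perm.mul_apply, Bool.xor_assoc,
      Bool.xor_comm (mGate n v p.1)]

/-- The product (composition) of the gates `C_u` over a finite set `S` of indices;
since the gates pairwise commute, it is independent of the order of composition. -/
def prodGates (n : ℕ) (S : Finset (Fin n → Bool)) : Equiv.Perm ((Fin n → Bool) × Bool) :=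
  S.noncommProd (gate n) (fun a _ b _ _ => gate_commute n a b)

instance : Std.Commutative (α := Bool) xor := ⟨Bool.xor_comm⟩
instance : Std.Associative (α := Bool) xor := ⟨Bool.xor_assoc⟩

/-- XOR of the Boolean values `f a` over a finite set `s`. -/
def xorSum {α : Type*} (s : Finset α) (f : α → Bool) : Bool :=
  s.fold xor false f

@[simp]
lemma xorSum_empty {α : Type*} (f : α → Bool) : xorSum ∅ f = false := rfl

lemma xorSum_cons {α : Type*} {a : α} {s : Finset α} (ha : a ∉ s) (f : α → Bool) :
    xorSum (s.cons a ha) f = xor (f a) (xorSum s f) :=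
  Finset.fold_cons ha

lemma xorSum_filter {α : Type*} (s : Finset α) (p : α → Prop) [DecidablePred p] (f : α → Bool) :
    xorSum (s.filter p) f = xorSum s fun a => decide (p a) && f a := by
  induction s using Finset.cons_induction with
  | empty => simp
  | cons a s ha ih => by_cases hp : p a <;> simp [Finset.filter_cons, xorSum_cons, hp, ih]

lemma gate_apply (n : ℕ) (u x : Fin n → Bool) (q : Bool) :
    gate n u (x, q) = (x, xor q (mGate n u x)) := rfl

@[simp]
lemma prodGates_empty (n : ℕ) : prodGates n ∅ = 1 := rfl

lemma prodGates_cons {n : ℕ} {u : Fin n → Bool} {S : Finset (Fin n → Bool)} (hu : u ∉ S) :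
    prodGates n (S.cons u hu) = gate n u * prodGates n S :=
  Finset.noncommProd_cons ..

lemma prodGates_apply_eq_xorSum (n : ℕ) (S : Finset (Fin n → Bool)) (x : Fin n → Bool)
    (q : Bool) :
    prodGates n S (x, q) = (x, xor q (xorSum S fun u => mGate n u x)) := by
  induction S using Finset.cons_induction with
  | empty => simp
  | cons u S hu ih =>
    calc prodGates n (S.cons u hu) (x, q)
        = gate n u (prodGates n S (x, q)) := by rw [prodGates_cons, Equiv.Perm.mul_apply]
      _ = (x, xor (xor q (xorSum S fun v => mGate n v x)) (mGate n u x)) := by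
        rw [ih, gate_apply]
      _ = (x, xor q (xorSum (S.cons u hu) fun v => mGate n v x)) := by
        rw [xorSum_cons, Bool.xor_assoc, Bool.xor_comm (mGate n u x)]

/-- the product of the gates `C_u` over all `u` with `c u = true` sends the
basis state `(x, q)` to `(x, q XOR f(x))`, where `f(x)` is the XOR over all `u` of
`c u AND m_u(x)`; i.e. the circuit `Φ(f)` of the ANF of `f` computes `f` on the read-out. -/
theorem prodGates_apply (n : ℕ) (c : (Fin n → Bool) → Bool)
    (x : Fin n → Bool) (q : Bool) :
    prodGates n (Finset.univ.filter fun u => c u = true) (x, q) =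
      (x, xor q (xorSum Finset.univ fun u : Fin n → Bool => c u && mGate n u x)) := by
  simp only [prodGates_apply_eq_xorSum, xorSum_filter, Bool.decide_eq_true]
end

section
/- For every n : ℕ, the subgroup of the permutation group of (Fin n → Bool) × Bool generated by the 2^n gates {C_u | u ∈ (Fin n → Bool)} has exactly 2^(2^n) elements; equivalently, the map sending a subset S ⊆ (Fin n → Bool) to the permutation ∏_{u ∈ S} C_u is a bijection from subsets of (Fin n → Bool) onto this subgroup. -/
/-!
The gates are commuting involutions, so `S ↦ ∏_{u ∈ S} C_u` turns symmetric differences into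
products. Its image is therefore a subgroup, and it is injective as soon as `∏_{u ∈ S} C_u ≠ 1`
for every nonempty `S`. In the product order, `C_u` moves `(x, q)` exactly when `u ≤ x`; so if `x`
is a minimal element of `S`, then `C_x` is the only factor moving `(x, q)`, and the product is not
the identity.
-/

section CommutingInvolutions

open scoped symmDiff Function

variable {ι M : Type*} [Monoid M] {f : ι → M}

theorem noncommProd_mul_self (comm : Pairwise (Commute on f)) (sq : ∀ i, f i * f i = 1)
    (S : Finset ι) :
    S.noncommProd f (comm.set_pairwise S) * S.noncommProd f (comm.set_pairwise S) = 1 := by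
  have comm' := comm.set_pairwise (S : Set ι)
  rw [← Finset.noncommProd_mul_distrib f f comm' comm' comm',
    Finset.noncommProd_eq_pow_card S (f * f) _ 1 fun i _ => sq i, one_pow]

theorem noncommProd_symmDiff [DecidableEq ι] (comm : Pairwise (Commute on f))
    (sq : ∀ i, f i * f i = 1) (S T : Finset ι) :
    (S ∆ T).noncommProd f (comm.set_pairwise _) =
      S.noncommProd f (comm.set_pairwise S) * T.noncommProd f (comm.set_pairwise T) := by
  let P (A : Finset ι) : M := A.noncommProd f (comm.set_pairwise A)
  have P_union {A B : Finset ι} (h : Disjoint A B) : P (A ∪ B) = P A * P B :=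
    Finset.noncommProd_union_of_disjoint h f (comm.set_pairwise _)
  have P_left : P S = P (S \ T) * P (S ∩ T) := by
    rw [← P_union (Finset.disjoint_sdiff_inter S T), Finset.sdiff_union_inter]
  have P_right : P T = P (S ∩ T) * P (T \ S) := by
    rw [Finset.inter_comm, ← P_union (Finset.disjoint_sdiff_inter T S).symm, Finset.union_comm,
      Finset.sdiff_union_inter]
  calc P (S ∆ T) = P (S \ T) * P (T \ S) := P_union disjoint_sdiff_sdiff
    _ = P (S \ T) * (P (S ∩ T) * P (S ∩ T)) * P (T \ S) := by
      rw [noncommProd_mul_self comm sq, mul_one]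
    _ = P S * P T := by rw [P_left, P_right]; simp only [mul_assoc]

theorem noncommProd_injective (comm : Pairwise (Commute on f)) (sq : ∀ i, f i * f i = 1)
    (indep : ∀ S : Finset ι, S.Nonempty → S.noncommProd f (comm.set_pairwise S) ≠ 1) :
    Function.Injective fun S : Finset ι => S.noncommProd f (comm.set_pairwise S) := by
  classical
  intro S T (hST : S.noncommProd f _ = T.noncommProd f _)
  have symmDiff_prod : (S ∆ T).noncommProd f (comm.set_pairwise _) = 1 := by
    rw [noncommProd_symmDiff comm sq, hST, noncommProd_mul_self comm sq]
  by_contra hne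
  exact indep _ (Finset.symmDiff_nonempty.mpr hne) symmDiff_prod

variable {G : Type*} [Group G] {g : ι → G}

theorem coe_closure_range_eq_range_noncommProd (comm : Pairwise (Commute on g))
    (sq : ∀ i, g i * g i = 1) :
    (Subgroup.closure (Set.range g) : Set G) =
      Set.range fun S : Finset ι => S.noncommProd g (comm.set_pairwise S) := by
  classical
  refine Set.Subset.antisymm (fun a ha => ?_) ?_
  · induction ha using Subgroup.closure_induction with
    | mem _ h =>
      obtain ⟨i, rfl⟩ := h
      exact ⟨{i}, Finset.noncommProd_singleton i g⟩
    | one => exact ⟨∅, Finset.noncommProd_empty g _⟩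
    | mul _ _ _ _ hS hT =>
      obtain ⟨S, rfl⟩ := hS
      obtain ⟨T, rfl⟩ := hT
      exact ⟨S ∆ T, noncommProd_symmDiff comm sq S T⟩
    | inv _ _ hS =>
      obtain ⟨S, rfl⟩ := hS
      exact ⟨S, eq_inv_of_mul_eq_one_left (noncommProd_mul_self comm sq S)⟩
  · rintro _ ⟨S, rfl⟩
    exact Subgroup.noncommProd_mem _ _ fun i _ => Subgroup.subset_closure ⟨i, rfl⟩

theorem card_closure_range_eq_two_pow [Finite ι] (comm : Pairwise (Commute on g))
    (sq : ∀ i, g i * g i = 1)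
    (indep : ∀ S : Finset ι, S.Nonempty → S.noncommProd g (comm.set_pairwise S) ≠ 1) :
    Nat.card (Subgroup.closure (Set.range g)) = 2 ^ Nat.card ι := by
  have := Fintype.ofFinite ι
  rw [← SetLike.coe_sort_coe, coe_closure_range_eq_range_noncommProd comm sq,
    Nat.card_range_of_injective (noncommProd_injective comm sq indep),
    Nat.card_eq_fintype_card, Fintype.card_finset, Nat.card_eq_fintype_card]

end CommutingInvolutions

theorem noncommProd_smul_eq_smul_of_forall_ne {ι M X : Type*} [Monoid M] [MulAction M X]
    {f : ι → M} {S : Finset ι} (comm : (S : Set ι).Pairwise (Function.onFun Commute f))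
    {i : ι} (hi : i ∈ S) {p : X} (fixed : ∀ j ∈ S, j ≠ i → f j • p = p) :
    S.noncommProd f comm • p = f i • p := by
  classical
  have comm_erase : ((S.erase i : Finset ι) : Set ι).Pairwise (Function.onFun Commute f) :=
    comm.mono (Finset.coe_subset.mpr (S.erase_subset i))
  have rest_fixed : (S.erase i).noncommProd f comm_erase ∈ MulAction.stabilizerSubmonoid M p :=
    Submonoid.noncommProd_mem _ _ _ _ fun j hj =>
      fixed j (Finset.mem_of_mem_erase hj) (Finset.ne_of_mem_erase hj)
  rw [← Finset.mul_noncommProd_erase S hi f comm, mul_smul,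
    MulAction.mem_stabilizerSubmonoid_iff.mp rest_fixed]

theorem pairwise_commute_gate (n : ℕ) : Pairwise (Function.onFun Commute (gate n)) :=
  fun u v _ => gate_commute n u v

theorem gate_mul_self (n : ℕ) (u : Fin n → Bool) : gate n u * gate n u = 1 :=
  Equiv.ext (gateFun_invol n u)

theorem mGate_eq_true_iff_le {n : ℕ} {u x : Fin n → Bool} : mGate n u x = true ↔ u ≤ x := by
  simp only [mGate, decide_eq_true_eq, Pi.le_def, Bool.le_iff_imp]

theorem gate_apply_eq_self_iff {n : ℕ} {u x : Fin n → Bool} {q : Bool} :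
    gate n u (x, q) = (x, q) ↔ ¬u ≤ x := by
  rw [← mGate_eq_true_iff_le]
  change (x, xor q (mGate n u x)) = (x, q) ↔ _
  cases q <;> simp

theorem prodGates_ne_one {n : ℕ} {S : Finset (Fin n → Bool)} (hS : S.Nonempty) :
    prodGates n S ≠ 1 := by
  obtain ⟨x, x_minimal⟩ := S.exists_minimal hS
  have others_fix (u : Fin n → Bool) (hu : u ∈ S) (hux : u ≠ x) :
      gate n u (x, false) = (x, false) :=
    gate_apply_eq_self_iff.mpr fun hle => hux (x_minimal.eq_of_le hu hle)
  have prod_apply : prodGates n S (x, false) = gate n x (x, false) :=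
    noncommProd_smul_eq_smul_of_forall_ne ((pairwise_commute_gate n).set_pairwise S)
      x_minimal.prop others_fix
  intro prod_eq_one
  rw [prod_eq_one] at prod_apply
  exact gate_apply_eq_self_iff.mp prod_apply.symm le_rfl

/-- the subgroup generated by the `2^n` gates `{C_u}` has exactly `2^(2^n)`
elements; equivalently, `S ↦ ∏_{u ∈ S} C_u` is a bijection from the subsets of
`Fin n → Bool` onto this subgroup. -/
theorem closure_card_and_bijection (n : ℕ) :
    Nat.card (Subgroup.closure (Set.range (gate n))) = 2 ^ (2 ^ n) ∧
    Function.Injective (fun S : Finset (Fin n → Bool) => prodGates n S) ∧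
    (∀ S : Finset (Fin n → Bool), prodGates n S ∈ Subgroup.closure (Set.range (gate n))) ∧
    (∀ g ∈ Subgroup.closure (Set.range (gate n)),
      ∃ S : Finset (Fin n → Bool), prodGates n S = g) := by
  have comm := pairwise_commute_gate n
  have indep : ∀ S : Finset (Fin n → Bool), S.Nonempty → prodGates n S ≠ 1 :=
    fun _ => prodGates_ne_one
  have closure_eq : (Subgroup.closure (Set.range (gate n)) : Set _) = Set.range (prodGates n) :=
    coe_closure_range_eq_range_noncommProd comm (gate_mul_self n)
  refine ⟨?_, noncommProd_injective comm (gate_mul_self n) indep,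
    fun S => closure_eq.ge ⟨S, rfl⟩, fun g hg => closure_eq.le hg⟩
  simpa using card_closure_range_eq_two_pow comm (gate_mul_self n) indep
end

section
/- For every n : ℕ, every target function f : (Fin n → Bool) → Bool, and every k ≥ 1, the set of erroneous inputs after the k-th update satisfies E^(k) ⊆ {x ∈ (Fin n → Bool) | w_H(x) ≥ k}. -/
/-- The Hamming weight `w_H(u) = |1_u|` of a bit string. -/
def hammingWeight (n : ℕ) (u : Fin n → Bool) : ℕ :=
  (Finset.univ.filter fun i => u i = true).card

/-- The output `h_g(x)` of the network with coefficient function `g`: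
the XOR over all `u` of `g u AND m_u(x)`. -/
def netOut (n : ℕ) (g : (Fin n → Bool) → Bool) (x : Fin n → Bool) : Bool :=
  xorSum Finset.univ fun u : Fin n → Bool => g u && mGate n u x

/-- The sequence of coefficient functions produced by the learning algorithm for the
target function `f`: `g⁽⁰⁾` is constant false, and `g⁽ᵏ⁺¹⁾` flips `g⁽ᵏ⁾` exactly on the
erroneous inputs `E⁽ᵏ⁾ = {x | h_{g⁽ᵏ⁾}(x) ≠ f(x)}`. -/
def gSeq (n : ℕ) (f : (Fin n → Bool) → Bool) : ℕ → ((Fin n → Bool) → Bool)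
  | 0 => fun _ => false
  | k + 1 => fun u =>
      if netOut n (gSeq n f k) u ≠ f u then !(gSeq n f k u) else gSeq n f k u

/-!
Since `m_u(x)` says `u ≤ x` pointwise and XOR is the addition of the Boolean ring `Bool`, the
network computes the zeta transform `h_g(x) = ∑ u ≤ x, g u`, and an update replaces `g` by `g - e`,
where `e = h_g - f` is the error. By linearity the new error at `x` is
`e x - ∑ u ≤ x, e u = -∑ u < x, e u`, so an error at `x` forces an error of the previous network at
some `u < x`. Hence an error after `k` updates sits at the top of a strict chain of length `k`,
along which the weight grows by at least one at each step.
-/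

open Finset

section Poset

variable {α A : Type*} [PartialOrder α] [LocallyFiniteOrderBot α] [AddCommGroup A]

/-- The zeta transform `x ↦ ∑ u ≤ x, g u` of a function on a poset. For `α = Fin n → Bool` and
`A = Bool`, whose addition is XOR, it is the network output `h_g`. -/
def zetaTransform (g : α → A) (x : α) : A :=
  ∑ u ∈ Iic x, g u

/-- The error `h_g - f` of the coefficient function `g` for the target `f`; the erroneous inputs
are its support. -/
def tuningError (f g : α → A) : α → A :=
  zetaTransform g - f

/-- One update of the learning algorithm with target `f`: it subtracts the error from the
coefficients, which over `Bool` flips them exactly on the erroneous inputs. -/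
def tune (f g : α → A) : α → A :=
  g - tuningError f g

theorem zetaTransform_sub (g₁ g₂ : α → A) :
    zetaTransform (g₁ - g₂) = zetaTransform g₁ - zetaTransform g₂ :=
  funext fun _ => sum_sub_distrib g₁ g₂

theorem tuningError_tune_apply (f g : α → A) (x : α) :
    tuningError f (tune f g) x = -∑ u ∈ Iio x, tuningError f g u :=
  calc tuningError f (tune f g) x
      = tuningError f g x - zetaTransform (tuningError f g) x := by
        rw [tuningError, tune, zetaTransform_sub, sub_right_comm, ← tuningError, Pi.sub_apply]
    _ = -∑ u ∈ Iio x, tuningError f g u := by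
        rw [zetaTransform, ← add_sum_Iio_eq_sum_Iic, sub_add_cancel_left]

theorem exists_lt_tuningError_ne_zero {f g : α → A} {x : α} (hx : tuningError f (tune f g) x ≠ 0) :
    ∃ u < x, tuningError f g u ≠ 0 := by
  rw [tuningError_tune_apply, neg_ne_zero] at hx
  simpa only [mem_Iio] using exists_ne_zero_of_sum_ne_zero hx

theorem errors_have_high_weight_general {w : α → ℕ} (hw : StrictMono w) (f g : α → A) (k : ℕ) :
    {x | zetaTransform ((tune f)^[k] g) x ≠ f x} ⊆ {x | k ≤ w x} := by
  induction k with
  | zero => exact fun x _ => Nat.zero_le (w x)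
  | succ k ih =>
    intro x hx
    rw [Function.iterate_succ_apply'] at hx
    obtain ⟨u, hux, hu⟩ := exists_lt_tuningError_ne_zero (sub_ne_zero.mpr hx)
    have hku : k ≤ w u := ih (sub_ne_zero.mp hu)
    exact hku.trans_lt (hw hux)

end Poset

section BooleanCube

instance : LocallyFiniteOrder Bool :=
  Fintype.toLocallyFiniteOrder

theorem xorSum_eq_sum {α : Type*} (s : Finset α) (f : α → Bool) : xorSum s f = ∑ a ∈ s, f a :=
  (sum_eq_fold s f).symm

variable {n : ℕ}

theorem mGate_eq_true_iff {u x : Fin n → Bool} : mGate n u x = true ↔ u ≤ x := by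
  simp only [mGate, decide_eq_true_eq, Pi.le_def, Bool.le_iff_imp]

theorem netOut_eq_zetaTransform (g : (Fin n → Bool) → Bool) : netOut n g = zetaTransform g := by
  funext x
  have hIic : ({u | mGate n u x = true} : Finset (Fin n → Bool)) = Iic x := by
    ext u
    simp only [mem_filter_univ, mem_Iic, mGate_eq_true_iff]
  calc netOut n g x
      = ∑ u, if mGate n u x = true then g u else 0 := by
        rw [netOut, xorSum_eq_sum]
        refine sum_congr rfl fun u _ => ?_
        cases mGate n u x <;> simp [Bool.zero_eq_false]
    _ = zetaTransform g x := by
        rw [← sum_filter, hIic, zetaTransform]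

theorem gSeq_succ (f : (Fin n → Bool) → Bool) (k : ℕ) :
    gSeq n f (k + 1) = tune f (gSeq n f k) := by
  funext u
  simp only [gSeq, tune, tuningError, netOut_eq_zetaTransform, Pi.sub_apply, Bool.sub_eq_xor]
  cases zetaTransform (gSeq n f k) u <;> cases f u <;> simp

theorem gSeq_eq_iterate_tune (f : (Fin n → Bool) → Bool) (k : ℕ) :
    gSeq n f k = (tune f)^[k] 0 := by
  induction k with
  | zero => rfl
  | succ k ih => rw [gSeq_succ, ih, Function.iterate_succ_apply']

theorem hammingWeight_strictMono : StrictMono (hammingWeight n) := by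
  intro u x hux
  obtain ⟨hle, i, hi⟩ := Pi.lt_def.mp hux
  obtain ⟨hui, hxi⟩ := Bool.lt_iff.mp hi
  refine card_lt_card ((ssubset_iff_of_subset ?_).mpr ⟨i, ?_, ?_⟩)
  · exact monotone_filter_right _ fun j _ => Bool.le_iff_imp.mp (hle j)
  · simpa only [mem_filter_univ] using hxi
  · simp only [mem_filter_univ, hui, Bool.false_eq_true, not_false_eq_true]

end BooleanCube

/-- for `k ≥ 1`, the erroneous inputs after the `k`-th update satisfy
`E⁽ᵏ⁾ ⊆ {x | w_H(x) ≥ k}`. -/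
theorem errors_have_high_weight (n : ℕ) (f : (Fin n → Bool) → Bool)
    (k : ℕ) (hk : 1 ≤ k) :
    {x : Fin n → Bool | netOut n (gSeq n f k) x ≠ f x} ⊆
      {x : Fin n → Bool | k ≤ hammingWeight n x} := by
  rw [netOut_eq_zetaTransform, gSeq_eq_iterate_tune]
  exact errors_have_high_weight_general hammingWeight_strictMono f 0 k
end

section
/- For every n ≥ 1 and every x ∈ (Fin n → Bool), writing x₁₀ = ∑_{j=0}^{n-1} x_j · 2^(n-1-j) for the decimal value of the bit string x (x_j ∈ {0,1}), the product over j = 0,…,n−1 of (cos θ_{n-1-j} if x_j = 0, and sin θ_{n-1-j} if x_j = 1), where θ_m = arccos(√(2^(2^m)/(2^(2^m)+1))), equals √(2^(2^n − 1 − x₁₀)/(2^(2^n) − 1)). In particular, the tensor product U_↓ = R_y(2θ_{n-1}) ⊗ ⋯ ⊗ R_y(2θ_0) applied to |0⟩^⊗n produces the state ∑_{x} √(2^(2^n−1−x₁₀)/(2^(2^n)−1)) |x⟩. -/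
/-- The rotation angle `θ_m = arccos √(2^(2^m)/(2^(2^m)+1))`. -/
noncomputable def theta (m : ℕ) : ℝ :=
  Real.arccos (Real.sqrt ((2 : ℝ) ^ (2 ^ m) / ((2 : ℝ) ^ (2 ^ m) + 1)))

/-- The decimal value `x₁₀ = ∑_j x_j · 2^(n−1−j)` of a bit string `x : Fin n → Bool`. -/
def toDecimal (n : ℕ) (x : Fin n → Bool) : ℕ :=
  ∑ j : Fin n, if x j then 2 ^ (n - 1 - (j : ℕ)) else 0

/-!
Let `y` be the bitwise complement of `x`. Both amplitudes of the `m`-th rotation are square roots of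
fractions with denominator `2^(2^m) + 1`, whose numerator is `2^(2^m)` for the bit `0` and `1` for
the bit `1`. Multiplying out under one square root, the numerators give `2^(y₁₀)` with
`y₁₀ = 2^n - 1 - x₁₀`, and the denominators give the telescoping product of the Fermat numbers,
`2^(2^n) - 1`.
-/

theorem cos_arccos_sqrt {p : ℝ} (hp : p ≤ 1) : Real.cos (Real.arccos √p) = √p :=
  Real.cos_arccos (neg_one_lt_zero.le.trans p.sqrt_nonneg) (Real.sqrt_le_one.mpr hp)

theorem sin_arccos_sqrt {p : ℝ} (hp : 0 ≤ p) : Real.sin (Real.arccos √p) = √(1 - p) := by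
  rw [Real.sin_arccos, Real.sq_sqrt hp]

theorem cos_theta (m : ℕ) : Real.cos (theta m) = √(2 ^ 2 ^ m / (2 ^ 2 ^ m + 1)) :=
  cos_arccos_sqrt (div_le_one_of_le₀ (by simp) (by positivity))

theorem sin_theta (m : ℕ) : Real.sin (theta m) = √(1 / (2 ^ 2 ^ m + 1)) := by
  rw [theta, sin_arccos_sqrt (by positivity), one_sub_div (by positivity), add_sub_cancel_left]

theorem ite_sin_cos_theta (b : Bool) (m : ℕ) :
    (if b then Real.sin (theta m) else Real.cos (theta m)) =
      √(2 ^ (if !b then 2 ^ m else 0) / (2 ^ 2 ^ m + 1)) := by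
  cases b <;> simp [cos_theta, sin_theta]

@[to_additive]
theorem prod_univ_reflect_eq_prod_range {M : Type*} [CommMonoid M] (f : ℕ → M) (n : ℕ) :
    ∏ j : Fin n, f (n - 1 - j) = ∏ i ∈ Finset.range n, f i := by
  rw [← Fin.prod_univ_eq_prod_range, ← Equiv.prod_comp Fin.revPerm (fun j ↦ f j)]
  simp only [Fin.revPerm_apply, Fin.val_rev, Nat.sub_sub, Nat.add_comm 1]

theorem toDecimal_not_add_toDecimal {n : ℕ} (x : Fin n → Bool) :
    toDecimal n (fun j ↦ !x j) + toDecimal n x = 2 ^ n - 1 :=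
  calc
    toDecimal n (fun j ↦ !x j) + toDecimal n x = ∑ j : Fin n, 2 ^ (n - 1 - j : ℕ) := by
      rw [toDecimal, toDecimal, ← Finset.sum_add_distrib]
      exact Finset.sum_congr rfl fun j _ ↦ by cases x j <;> simp
    _ = ∑ i ∈ Finset.range n, 2 ^ i := sum_univ_reflect_eq_sum_range (2 ^ ·) n
    _ = 2 ^ n - 1 := by simp [Nat.geomSum_eq le_rfl]

theorem toDecimal_not {n : ℕ} (x : Fin n → Bool) :
    toDecimal n (fun j ↦ !x j) = 2 ^ n - 1 - toDecimal n x :=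
  Nat.eq_sub_of_add_eq (toDecimal_not_add_toDecimal x)

theorem prod_range_pow_two_pow_add_one {R : Type*} [CommRing R] (a : R) (n : ℕ) :
    (∏ i ∈ Finset.range n, (a ^ 2 ^ i + 1)) * (a - 1) = a ^ 2 ^ n - 1 := by
  simpa only [one_pow] using (pow_two_pow_sub_pow_two_pow (x := a) (y := 1) n).symm

/-- for `n ≥ 1` and `x : Fin n → Bool`, the amplitude produced by
`U_↓ = R_y(2θ_{n−1}) ⊗ ⋯ ⊗ R_y(2θ_0)` on the basis state `|x⟩`, namely the product over
`j` of `cos θ_{n−1−j}` if `x_j = 0` and `sin θ_{n−1−j}` if `x_j = 1`, equals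
`√(2^(2^n − 1 − x₁₀) / (2^(2^n) − 1))`. -/
theorem amplitude_formula (n : ℕ) (hn : 1 ≤ n) (x : Fin n → Bool) :
    (∏ j : Fin n,
        if x j then Real.sin (theta (n - 1 - (j : ℕ)))
        else Real.cos (theta (n - 1 - (j : ℕ)))) =
      Real.sqrt ((2 : ℝ) ^ (2 ^ n - 1 - toDecimal n x) / ((2 : ℝ) ^ (2 ^ n) - 1)) := by
  calc
    _ = ∏ j : Fin n, √((2 : ℝ) ^ (if !x j then 2 ^ (n - 1 - j : ℕ) else 0) /
          (2 ^ 2 ^ (n - 1 - j : ℕ) + 1)) :=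
      Finset.prod_congr rfl fun j _ ↦ ite_sin_cos_theta (x j) (n - 1 - j)
    _ = √((∏ j : Fin n, (2 : ℝ) ^ (if !x j then 2 ^ (n - 1 - j : ℕ) else 0)) /
          ∏ j : Fin n, ((2 : ℝ) ^ 2 ^ (n - 1 - j : ℕ) + 1)) := by
      rw [← Finset.prod_div_distrib, Real.sqrt_prod _ fun j _ ↦ by positivity]
    _ = √(2 ^ toDecimal n (fun j ↦ !x j) / ∏ i ∈ Finset.range n, ((2 : ℝ) ^ 2 ^ i + 1)) := by
      rw [Finset.prod_pow_eq_pow_sum, toDecimal,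
        prod_univ_reflect_eq_prod_range (fun i ↦ (2 : ℝ) ^ 2 ^ i + 1)]
    _ = √(2 ^ (2 ^ n - 1 - toDecimal n x) / (2 ^ 2 ^ n - 1)) := by
      rw [toDecimal_not, ← prod_range_pow_two_pow_add_one 2 n, (by norm_num : (2 : ℝ) - 1 = 1),
        mul_one]
end
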